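/- Let r ≥ 3 be an integer. For every ε > 0 there exists a constant c = c(ε) > 0 such that for every odd prime power q and every subset E ⊆ (M_3(𝔽_q))^r with #E > c·q^{7r+4+ε}, one has Δ(E) = M_3(𝔽_q). -/

import Mathlib

open scoped BigOperators
namespace Falc
open Finset
open Classical in
lemma orth {F V : Type} [Field F] [AddCommGroup V] [Module F V] [Fintype V]
    (ψ : AddChar F ℂ) (hψ : ψ ≠ 1) (ℓ : V →ₗ[F] F) :
    ∑ x, ψ (ℓ x) = if ℓ = 0 then (Fintype.card V : ℂ) else 0 := by
  split_ifs with h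
  · subst h; simp
  · have : ∃ v, ℓ v ≠ 0 := by
      by_contra hc
      push Not at hc
      exact h (LinearMap.ext hc)
    obtain ⟨v, hv⟩ := this
    obtain ⟨a, ha⟩ := (AddChar.ne_one_iff).1 hψ
    have h2 : (ψ.compAddMonoidHom ℓ.toAddMonoidHom) ≠ 1 := by
      rw [AddChar.ne_one_iff]
      refine ⟨(a / ℓ v) • v, ?_⟩
      simpa [hv] using ha
    simpa using AddChar.sum_eq_zero_of_ne_one h2

lemma normSq_sum {ι : Type} (s : Finset ι) (f : ι → ℂ) :
    ((‖∑ i ∈ s, f i‖ ^ 2 : ℝ) : ℂ) = ∑ i ∈ s, ∑ j ∈ s, f i * (starRingEnd ℂ) (f j) := by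
  push_cast
  rw [← Complex.mul_conj', map_sum, Finset.sum_mul_sum]

open Classical in
lemma core {F V : Type} [Field F] [Fintype F] [AddCommGroup V] [Module F V] [Fintype V]
    (ψ : AddChar F ℂ) (hψ : ψ ≠ 1) (Q : V → F) (L : V → (V →ₗ[F] F))
    (hQ : ∀ X Y Y', Q (X - Y) - Q (X - Y') = Q Y - Q Y' - L (Y - Y') X) (E : Finset V) :
    ‖∑ X ∈ E, ∑ Y ∈ E, ψ (Q (X - Y))‖ ^ 2 ≤
      (E.card : ℝ) ^ 2 * ((Fintype.card V : ℝ) * ((univ.filter (fun W => L W = 0)).card : ℝ)) := by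
  have h1 : ‖∑ X ∈ E, ∑ Y ∈ E, ψ (Q (X - Y))‖ ^ 2 ≤
      (E.card : ℝ) * ∑ X ∈ E, ‖∑ Y ∈ E, ψ (Q (X - Y))‖ ^ 2 := by
    refine le_trans ?_ sq_sum_le_card_mul_sum_sq
    exact pow_le_pow_left₀ (norm_nonneg _) (norm_sum_le _ _) 2
  have h2 : ∑ X ∈ E, ‖∑ Y ∈ E, ψ (Q (X - Y))‖ ^ 2 ≤ ∑ X, ‖∑ Y ∈ E, ψ (Q (X - Y))‖ ^ 2 :=
    Finset.sum_le_sum_of_subset_of_nonneg (subset_univ _) (fun _ _ _ => by positivity)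
  have h3 : ((∑ X, ‖∑ Y ∈ E, ψ (Q (X - Y))‖ ^ 2 : ℝ) : ℂ) =
      ∑ Y ∈ E, ∑ Y' ∈ E, ψ (Q Y - Q Y') *
        (if L (Y - Y') = 0 then (Fintype.card V : ℂ) else 0) := by
    rw [Complex.ofReal_sum]
    simp_rw [normSq_sum]
    rw [Finset.sum_comm]
    refine Finset.sum_congr rfl fun Y _ => ?_
    rw [Finset.sum_comm]
    refine Finset.sum_congr rfl fun Y' _ => ?_
    have e1 : ∀ X, ψ (Q (X - Y)) * (starRingEnd ℂ) (ψ (Q (X - Y'))) =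
        ψ (Q Y - Q Y') * ψ ((-L (Y - Y')) X) := by
      intro X
      rw [← AddChar.map_neg_eq_conj, ← AddChar.map_add_eq_mul, ← AddChar.map_add_eq_mul,
        ← sub_eq_add_neg, hQ]
      simp [sub_eq_add_neg]
    simp_rw [e1]
    rw [← Finset.mul_sum, orth ψ hψ]
    simp
  have h4 : (∑ X, ‖∑ Y ∈ E, ψ (Q (X - Y))‖ ^ 2 : ℝ) ≤
      ∑ Y ∈ E, ∑ Y' ∈ E, (if L (Y - Y') = 0 then (Fintype.card V : ℝ) else 0) := by
    have h5 : (∑ X, ‖∑ Y ∈ E, ψ (Q (X - Y))‖ ^ 2 : ℝ) =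
      ‖((∑ X, ‖∑ Y ∈ E, ψ (Q (X - Y))‖ ^ 2 : ℝ) : ℂ)‖ := by
      rw [Complex.norm_real, Real.norm_of_nonneg]
      exact Finset.sum_nonneg fun _ _ => by positivity
    rw [h5, h3]
    refine (norm_sum_le _ _).trans (Finset.sum_le_sum fun Y _ => ?_)
    refine (norm_sum_le _ _).trans (Finset.sum_le_sum fun Y' _ => ?_)
    rw [norm_mul, AddChar.norm_apply, one_mul]
    split_ifs <;> simp
  have h6 : ∀ Y ∈ E, ∑ Y' ∈ E, (if L (Y - Y') = 0 then (Fintype.card V : ℝ) else 0) ≤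
      (Fintype.card V : ℝ) * ((univ.filter (fun W => L W = 0)).card : ℝ) := by
    intro Y _
    rw [← Finset.sum_filter, Finset.sum_const, nsmul_eq_mul, mul_comm]
    refine mul_le_mul_of_nonneg_left ?_ (Nat.cast_nonneg _)
    rw [Nat.cast_le]
    refine Finset.card_le_card_of_injOn (fun Y' => Y - Y') ?_ ?_
    · intro Y' h
      simpa using (Finset.mem_filter.1 h).2
    · intro a _ b _ h
      simpa using h
  calc _ ≤ _ := h1
    _ ≤ (E.card : ℝ) * (E.card * ((Fintype.card V : ℝ) *
      ((univ.filter (fun W => L W = 0)).card : ℝ))) := by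
      gcongr
      refine h2.trans (h4.trans ?_)
      rw [← nsmul_eq_mul]
      exact Finset.sum_le_card_nsmul _ _ _ h6
    _ = _ := by ring
abbrev Mt (F : Type) := Matrix (Fin 3) (Fin 3) F

lemma card_Mt {F : Type} [Field F] [Fintype F] : Fintype.card (Mt F) = Fintype.card F ^ 9 := by
  rw [Fintype.card_congr (Matrix.of (m := Fin 3) (n := Fin 3) (α := F)).symm]
  simp [← pow_mul]

open Classical in
noncomputable def K {F : Type} [Field F] [Fintype F] (A : Mt F) : Finset (Mt F) :=
  univ.filter (fun Z => A * Z + Z * A = 0)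

noncomputable def Lm {F : Type} [Field F] {r : ℕ} (C : Fin r → Mt F) : (Fin r → Mt F) →ₗ[F] F where
  toFun X := ∑ i, (C i * X i).trace
  map_add' X Y := by simp [mul_add, Finset.sum_add_distrib]
  map_smul' a X := by simp [Finset.mul_sum]

lemma trace_single {F : Type} [Field F] (C : Mt F) (i j : Fin 3) :
    (C * Matrix.single i j 1).trace = C j i := by
  rw [Matrix.trace_mul_comm]
  fin_cases i <;> fin_cases j <;> simp [Matrix.trace_fin_three, Matrix.mul_apply, Matrix.single_apply]

lemma Lm_eq_zero {F : Type} [Field F] {r : ℕ} (C : Fin r → Mt F) (h : Lm C = 0) : C = 0 := by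
  funext k
  ext i j
  have := LinearMap.congr_fun h (Pi.single k (Matrix.single j i 1))
  simp only [Lm, LinearMap.coe_mk, AddHom.coe_mk, LinearMap.zero_apply] at this
  rw [Finset.sum_eq_single k] at this
  · simpa [trace_single] using this
  · intro b _ hb; simp [hb]
  · simp

open Classical in
lemma boundA {F : Type} [Field F] [Fintype F] {r : ℕ} (ψ : AddChar F ℂ) (hψ : ψ ≠ 1)
    (A : Mt F) (E : Finset (Fin r → Mt F)) :
    ‖∑ X ∈ E, ∑ Y ∈ E, ψ ((A * ∑ i, (X i - Y i) ^ 2).trace)‖ ^ 2 ≤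
      (E.card : ℝ) ^ 2 * ((Fintype.card F : ℝ) ^ (9 * r) * ((K A).card : ℝ) ^ r) := by
  have := core ψ hψ (fun X : Fin r → Mt F => (A * ∑ i, (X i) ^ 2).trace)
    (fun W => Lm (fun i => A * W i + W i * A)) ?_ E
  · refine this.trans ?_
    gcongr
    · apply le_of_eq
      simp only [Fintype.card_pi, Finset.prod_const, card_univ, Fintype.card_fin, card_Mt]
      push_cast
      rw [← pow_mul]
    · rw [← Nat.cast_pow, Nat.cast_le]
      have e : (K A).card ^ r = (Fintype.piFinset (fun _ : Fin r => K A)).card := by simp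
      rw [e]
      apply Finset.card_le_card
      intro W hW
      have := Lm_eq_zero _ (Finset.mem_filter.1 hW).2
      rw [Fintype.mem_piFinset]
      intro i
      simpa [K] using congrFun this i
  · intro X Y Y'
    simp only [Lm, LinearMap.coe_mk, AddHom.coe_mk, Matrix.mul_sum, Matrix.trace_sum,
      ← Finset.sum_sub_distrib]
    refine Finset.sum_congr rfl fun i _ => ?_
    simp only [Pi.sub_apply, pow_two]
    simp only [mul_sub, sub_mul, add_mul, Matrix.trace_sub, Matrix.trace_add, ← mul_assoc]
    have t1 : ∀ P Q : Mt F, (P * A * Q).trace = (A * Q * P).trace := by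
      intro P Q
      rw [mul_assoc, Matrix.trace_mul_comm]
    simp only [t1]
    ring

open Classical in
lemma main1 {F : Type} [Field F] [Fintype F] {r : ℕ} (E : Finset (Fin r → Mt F)) (T : Mt F)
    (hT : ¬ ∃ X ∈ E, ∃ Y ∈ E, ∑ i, (X i - Y i) ^ 2 = T) :
    (E.card : ℝ) ≤ ∑ A ∈ univ.filter (fun A : Mt F => A ≠ 0),
      √((Fintype.card F : ℝ) ^ (9 * r) * ((K A).card : ℝ) ^ r) := by
  obtain ⟨ψ, hψ'⟩ := (AddChar.exists_apply_ne_zero (a := (1 : F))).2 one_ne_zero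
  have hψ : ψ ≠ 1 := AddChar.ne_one_iff.2 ⟨1, hψ'⟩
  rcases Nat.eq_zero_or_pos E.card with h0 | hpos
  · rw [h0]; simp only [Nat.cast_zero]
    exact Finset.sum_nonneg fun _ _ => Real.sqrt_nonneg _
  set S : Mt F → ℂ := fun A => ∑ X ∈ E, ∑ Y ∈ E, ψ ((A * ∑ i, (X i - Y i) ^ 2).trace) with hS
  have key : ∑ A : Mt F, ψ (-(A * T).trace) * S A = 0 := by
    simp only [hS, Finset.mul_sum]
    rw [Finset.sum_comm]
    refine Finset.sum_eq_zero fun X hX => ?_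
    rw [Finset.sum_comm]
    refine Finset.sum_eq_zero fun Y hY => ?_
    set D := ∑ i, (X i - Y i) ^ 2 - T with hD
    have hD0 : D ≠ 0 := fun h => hT ⟨X, hX, Y, hY, sub_eq_zero.1 h⟩
    have := orth ψ hψ ((Lm (r := 1) (fun _ => D)).comp (LinearMap.pi (fun _ => LinearMap.id)))
    rw [if_neg] at this
    · rw [← this]
      refine Finset.sum_congr rfl fun A _ => ?_
      rw [← AddChar.map_add_eq_mul]
      congr 1
      have e5 : ((Lm (r := 1) (fun _ => D)).comp (LinearMap.pi (fun _ => LinearMap.id))) A =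
        (D * A).trace := by simp [Lm]
      rw [e5, Matrix.trace_mul_comm D A, hD, mul_sub, Matrix.trace_sub, Finset.mul_sum]
      ring
    · intro h
      apply hD0
      have : Lm (r := 1) (fun _ => D) = 0 := by
        ext i W
        have := LinearMap.congr_fun h W
        fin_cases i
        simpa [Lm] using this
      exact congrFun (Lm_eq_zero _ this) 0
  have hS0 : ψ (-((0 : Mt F) * T).trace) * S 0 = (E.card : ℂ) ^ 2 := by
    simp [hS, pow_two]
  rw [← Finset.sum_filter_add_sum_filter_not univ (fun A : Mt F => A ≠ 0)] at key
  have e2 : univ.filter (fun A : Mt F => ¬ A ≠ 0) = {0} := by ext; simp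
  rw [e2, Finset.sum_singleton, hS0] at key
  have k2 : (E.card : ℝ) ^ 2 ≤ ∑ A ∈ univ.filter (fun A : Mt F => A ≠ 0),
      (E.card : ℝ) * √((Fintype.card F : ℝ) ^ (9 * r) * ((K A).card : ℝ) ^ r) := by
    have : (E.card : ℝ) ^ 2 = ‖(E.card : ℂ) ^ 2‖ := by simp
    rw [this, ← neg_eq_iff_add_eq_zero.2 key, norm_neg]
    refine (norm_sum_le _ _).trans (Finset.sum_le_sum fun A _ => ?_)
    rw [norm_mul, AddChar.norm_apply, one_mul]
    refine (pow_le_pow_iff_left₀ (norm_nonneg _) (by positivity) two_ne_zero).1 ?_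
    rw [mul_pow, Real.sq_sqrt (by positivity)]
    exact boundA ψ hψ A E
  rw [← Finset.mul_sum, pow_two] at k2
  exact le_of_mul_le_mul_left k2 (by exact_mod_cast hpos)
lemma two_ne {F : Type} [Field F] [Fintype F] (h : Odd (Fintype.card F)) : (2 : F) ≠ 0 := by
  apply Ring.two_ne_zero
  intro hc
  have := (FiniteField.even_card_iff_char_two (F := F)).1 hc
  rcases h with ⟨k, hk⟩
  omega

open Classical in
lemma line {F G : Type} [Field F] [Fintype F] [AddCommGroup G] [Module F G]
    (U S : Finset G) (B : G) (m : ℕ) (hSU : S ⊆ U) (hU : ∀ A ∈ U, ∀ x : F, A - x • B ∈ U)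
    (hm : ∀ A, (univ.filter fun x : F => A + x • B ∈ S).card ≤ m) :
    Fintype.card F * S.card ≤ m * U.card := by
  have h1 : ((univ : Finset F) ×ˢ S).card ≤
      (U.sigma (fun A => univ.filter fun x : F => A + x • B ∈ S)).card := by
    refine Finset.card_le_card_of_injOn (fun p => ⟨p.2 - p.1 • B, p.1⟩) ?_ ?_
    · rintro ⟨x, s⟩ h
      have hs : s ∈ S := (Finset.mem_product.1 h).2
      simp only [Finset.coe_sigma, Set.mem_sigma_iff, Finset.mem_coe, Finset.mem_filter]
      refine ⟨hU _ (hSU hs) _, by simp, by simpa using hs⟩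
    · rintro ⟨x, s⟩ _ ⟨y, t⟩ _ h
      simp only [Sigma.mk.injEq, heq_eq_eq] at h
      obtain ⟨h1, rfl⟩ := h
      simpa using h1
  rw [Finset.card_product, Finset.card_sigma, Finset.card_univ] at h1
  refine h1.trans ((Finset.sum_le_card_nsmul _ _ m (fun A _ => hm A)).trans ?_)
  simp [mul_comm]

open Classical in
lemma cub {F : Type} [Field F] [Fintype F] (a b c d : F) (ha : a ≠ 0) :
    (univ.filter fun x : F => a * x ^ 3 + b * x ^ 2 + c * x + d = 0).card ≤ 3 := by
  set p : Polynomial F := .C a * .X ^ 3 + .C b * .X ^ 2 + .C c * .X + .C d with hp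
  have hd : p.natDegree = 3 := Polynomial.natDegree_cubic ha
  have hp0 : p ≠ 0 := by intro h; rw [h] at hd; simp at hd
  refine le_trans ?_ ((Polynomial.card_roots' p).trans hd.le)
  refine le_trans (Finset.card_le_card ?_) (Multiset.toFinset_card_le _)
  intro x hx
  rw [Multiset.mem_toFinset, Polynomial.mem_roots hp0]
  simpa [hp] using hx

open Classical in
lemma lin {F : Type} [Field F] [Fintype F] (a b : F) (ha : a ≠ 0) :
    (univ.filter fun x : F => a * x + b = 0).card ≤ 1 := by
  rw [Finset.card_le_one]
  intro x hx y hy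
  simp only [Finset.mem_filter, mem_univ, true_and] at hx hy
  have : a * (x - y) = 0 := by linear_combination hx - hy
  have := (mul_eq_zero.1 this).resolve_left ha
  exact sub_eq_zero.1 this

def s2 {F : Type} [Field F] (A : Mt F) : F :=
  A 0 0 * A 1 1 - A 0 1 * A 1 0 + (A 0 0 * A 2 2 - A 0 2 * A 2 0) +
    (A 1 1 * A 2 2 - A 1 2 * A 2 1)

lemma CH {F : Type} [Field F] (A : Mt F) :
    A * A * A = A.trace • (A * A) - s2 A • A + A.det • (1 : Mt F) := by
  ext i j
  fin_cases i <;> fin_cases j <;>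
  simp [s2, Matrix.mul_apply, Fin.sum_univ_three, Matrix.det_fin_three, Matrix.trace_fin_three] <;>
  ring

open Classical in
noncomputable def G2 (F : Type) [Field F] [Fintype F] : Finset (Mt F) :=
  univ.filter fun A => A.det = 0 ∨ A.trace * s2 A = A.det
open Classical in
noncomputable def G3 (F : Type) [Field F] [Fintype F] : Finset (Mt F) :=
  univ.filter fun A => A.trace = 0 ∧ A.det = 0
open Classical in
noncomputable def G4 (F : Type) [Field F] [Fintype F] : Finset (Mt F) :=
  univ.filter fun A => ∃ u v : Fin 3 → F, (∃ i, u i = 1) ∧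
    (A = Matrix.vecMulVec u v ∨ A = Matrix.vecMulVec u v - ((u ⬝ᵥ v) / 2) • (1 : Mt F))
open Classical in
noncomputable def G5 (F : Type) [Field F] [Fintype F] : Finset (Mt F) :=
  univ.filter fun A => ∃ u v : Fin 3 → F, (∃ i, u i = 1) ∧ u ⬝ᵥ v = 0 ∧
    A = Matrix.vecMulVec u v

open Classical in
lemma G2_card {F : Type} [Field F] [Fintype F] (h2 : (2 : F) ≠ 0) :
    (G2 F).card ≤ 6 * Fintype.card F ^ 8 := by
  have hq : 0 < Fintype.card F := Fintype.card_pos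
  have a1 := line (F := F) (univ : Finset (Mt F)) (univ.filter fun A : Mt F => A.det = 0) 1 3
    (subset_univ _) (by simp) (by
      intro A
      refine le_trans (Finset.card_le_card ?_) (cub 1 A.trace (s2 A) A.det one_ne_zero)
      intro x hx
      simp only [Finset.mem_filter, mem_univ, true_and] at hx ⊢
      rw [← hx]
      simp [s2, Matrix.det_fin_three, Matrix.trace_fin_three]
      ring)
  have a2 := line (F := F) (univ : Finset (Mt F))
    (univ.filter fun A : Mt F => A.trace * s2 A = A.det) 1 3
    (subset_univ _) (by simp) (by
      intro A
      refine le_trans (Finset.card_le_card ?_) (cub (2 ^ 3) (8 * A.trace)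
        (2 * (A.trace ^ 2 + s2 A)) (A.trace * s2 A - A.det) (pow_ne_zero _ h2))
      intro x hx
      simp only [Finset.mem_filter, mem_univ, true_and] at hx ⊢
      rw [← sub_eq_zero] at hx
      rw [← hx]
      simp [s2, Matrix.det_fin_three, Matrix.trace_fin_three]
      ring)
  rw [card_univ, card_Mt] at a1 a2
  have e : G2 F = (univ.filter fun A : Mt F => A.det = 0) ∪
    (univ.filter fun A : Mt F => A.trace * s2 A = A.det) := by
    rw [← Finset.filter_or]; rfl
  have hu := Finset.card_union_le (univ.filter fun A : Mt F => A.det = 0)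
    (univ.filter fun A : Mt F => A.trace * s2 A = A.det)
  rw [← e] at hu
  refine Nat.le_of_mul_le_mul_left ?_ hq
  calc _ ≤ _ := Nat.mul_le_mul_left _ hu
    _ ≤ 3 * Fintype.card F ^ 9 + 3 * Fintype.card F ^ 9 := by rw [mul_add]; exact add_le_add a1 a2
    _ = _ := by ring

open Classical in
lemma G3_card {F : Type} [Field F] [Fintype F] (h2 : (2 : F) ≠ 0) :
    (G3 F).card ≤ 3 * Fintype.card F ^ 7 := by
  have hq : 0 < Fintype.card F := Fintype.card_pos
  have a1 := line (F := F) (univ : Finset (Mt F)) (univ.filter fun A : Mt F => A.trace = 0)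
    (Matrix.diagonal ![1, 0, 0]) 1
    (subset_univ _) (by simp) (by
      intro A
      refine le_trans (Finset.card_le_card ?_) (lin 1 A.trace one_ne_zero)
      intro x hx
      simp only [Finset.mem_filter, mem_univ, true_and] at hx ⊢
      rw [← hx]
      simp [Matrix.trace_fin_three, Fin.sum_univ_three]
      ring)
  have a2 := line (F := F) (univ.filter fun A : Mt F => A.trace = 0) (G3 F)
    (Matrix.diagonal ![1, 1, -2]) 3
    (by intro A; simp +contextual [G3]) (by
      intro A hA x
      simp only [Finset.mem_filter, mem_univ, true_and] at hA ⊢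
      rw [← hA]
      simp [Matrix.trace_fin_three, Fin.sum_univ_three]
      right
      ring) (by
      intro A
      refine le_trans (Finset.card_le_card ?_) (cub (-2) (-2 * A 0 0 - 2 * A 1 1 + A 2 2)
        (-2 * (A 0 0 * A 1 1 - A 0 1 * A 1 0) + (A 0 0 * A 2 2 - A 0 2 * A 2 0) +
          (A 1 1 * A 2 2 - A 1 2 * A 2 1)) A.det (neg_ne_zero.2 h2))
      intro x hx
      simp only [Finset.mem_filter, mem_univ, true_and, G3] at hx ⊢
      rw [← hx.2]
      simp [Matrix.det_fin_three]
      ring)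
  rw [card_univ, card_Mt] at a1
  refine _root_.le_of_mul_le_mul_left (a := Fintype.card F ^ 2) ?_ (by positivity)
  calc _ = Fintype.card F * (Fintype.card F * (G3 F).card) := by ring
    _ ≤ Fintype.card F * _ := Nat.mul_le_mul_left _ a2
    _ = 3 * (Fintype.card F * (univ.filter fun A : Mt F => A.trace = 0).card) := by ring
    _ ≤ 3 * _ := Nat.mul_le_mul_left _ a1
    _ = _ := by ring

open Classical in
noncomputable def P1 {F : Type} [Field F] [Fintype F] (i : Fin 3) :
    Finset ((Fin 3 → F) × (Fin 3 → F)) := univ.filter fun p => p.1 i = 1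
open Classical in
noncomputable def P0 {F : Type} [Field F] [Fintype F] (i : Fin 3) :
    Finset ((Fin 3 → F) × (Fin 3 → F)) := univ.filter fun p => p.1 i = 1 ∧ p.1 ⬝ᵥ p.2 = 0

lemma P1_card {F : Type} [Field F] [Fintype F] (i : Fin 3) :
    (P1 (F := F) i).card ≤ Fintype.card F ^ 5 := by
  classical
  have hq : 0 < Fintype.card F := Fintype.card_pos
  have a1 := line (F := F) univ (P1 (F := F) i) (Pi.single i 1, 0) 1
    (subset_univ _) (by simp) (by
      intro A
      refine le_trans (Finset.card_le_card ?_) (lin 1 (A.1 i - 1) one_ne_zero)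
      intro x hx
      simp only [P1, Finset.mem_filter, mem_univ, true_and] at hx ⊢
      simp at hx
      linear_combination hx)
  have e : Fintype.card ((Fin 3 → F) × (Fin 3 → F)) = Fintype.card F ^ 6 := by
    simp [← pow_add]
  rw [card_univ, e] at a1
  refine Nat.le_of_mul_le_mul_left (a1.trans (le_of_eq ?_)) hq
  ring

lemma P0_card {F : Type} [Field F] [Fintype F] (i : Fin 3) :
    (P0 (F := F) i).card ≤ Fintype.card F ^ 4 := by
  classical
  have hq : 0 < Fintype.card F := Fintype.card_pos
  have a1 := line (F := F) (P1 (F := F) i) (P0 (F := F) i) (0, Pi.single i 1) 1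
    (by intro p; simp +contextual [P1, P0]) (by intro p; simp +contextual [P1]) (by
      intro A
      by_cases hA : A.1 i = 1
      · refine le_trans (Finset.card_le_card ?_) (lin 1 (A.1 ⬝ᵥ A.2) one_ne_zero)
        intro x hx
        simp only [P0, Finset.mem_filter, mem_univ, true_and] at hx ⊢
        have := hx.2
        simp [hA] at this
        linear_combination this
      · rw [Finset.card_le_one]
        intro x hx
        simp [P0] at hx
        exact absurd hx.1 hA)
  refine Nat.le_of_mul_le_mul_left (a1.trans ?_) hq
  have := P1_card (F := F) i
  rw [one_mul]
  refine this.trans (le_of_eq ?_)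
  ring

lemma card_cover {α β : Type} [DecidableEq β] (P : Fin 3 → Finset α) (f : α → β) (m : ℕ)
    (h : ∀ i, (P i).card ≤ m) (S : Finset β) (hS : ∀ b ∈ S, ∃ i, ∃ a ∈ P i, f a = b) :
    S.card ≤ 3 * m := by
  have h1 : S ⊆ univ.biUnion (fun i => (P i).image f) := by
    intro b hb
    obtain ⟨i, a, ha, rfl⟩ := hS b hb
    exact Finset.mem_biUnion.2 ⟨i, mem_univ _, Finset.mem_image_of_mem _ ha⟩
  refine (Finset.card_le_card h1).trans ?_
  have := Finset.card_biUnion_le_card_mul (univ : Finset (Fin 3)) (fun i => (P i).image f) m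
    (fun i _ => Finset.card_image_le.trans (h i))
  simpa using this

lemma G5_card {F : Type} [Field F] [Fintype F] : (G5 F).card ≤ 3 * Fintype.card F ^ 4 := by
  classical
  refine card_cover (P0 (F := F)) (fun p => Matrix.vecMulVec p.1 p.2) _ P0_card _ ?_
  intro A hA
  simp only [G5, Finset.mem_filter, mem_univ, true_and] at hA
  obtain ⟨u, v, ⟨i, hi⟩, h0, rfl⟩ := hA
  exact ⟨i, (u, v), by simp [P0, hi, h0], rfl⟩

lemma G4_card {F : Type} [Field F] [Fintype F] : (G4 F).card ≤ 6 * Fintype.card F ^ 5 := by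
  classical
  have a1 : (univ.filter fun A : Mt F => ∃ u v : Fin 3 → F, (∃ i, u i = 1) ∧
      A = Matrix.vecMulVec u v).card ≤ 3 * Fintype.card F ^ 5 := by
    refine card_cover (P1 (F := F)) (fun p => Matrix.vecMulVec p.1 p.2) _ P1_card _ ?_
    intro A hA
    simp only [Finset.mem_filter, mem_univ, true_and] at hA
    obtain ⟨u, v, ⟨i, hi⟩, rfl⟩ := hA
    exact ⟨i, (u, v), by simp [P1, hi], rfl⟩
  have a2 : (univ.filter fun A : Mt F => ∃ u v : Fin 3 → F, (∃ i, u i = 1) ∧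
      A = Matrix.vecMulVec u v - ((u ⬝ᵥ v) / 2) • (1 : Mt F)).card ≤ 3 * Fintype.card F ^ 5 := by
    refine card_cover (P1 (F := F)) (fun p => Matrix.vecMulVec p.1 p.2 -
      ((p.1 ⬝ᵥ p.2) / 2) • (1 : Mt F)) _ P1_card _ ?_
    intro A hA
    simp only [Finset.mem_filter, mem_univ, true_and] at hA
    obtain ⟨u, v, ⟨i, hi⟩, rfl⟩ := hA
    exact ⟨i, (u, v), by simp [P1, hi], rfl⟩
  have h : G4 F ⊆ (univ.filter fun A : Mt F => ∃ u v : Fin 3 → F, (∃ i, u i = 1) ∧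
      A = Matrix.vecMulVec u v) ∪ (univ.filter fun A : Mt F => ∃ u v : Fin 3 → F, (∃ i, u i = 1) ∧
      A = Matrix.vecMulVec u v - ((u ⬝ᵥ v) / 2) • (1 : Mt F)) := by
    intro A hA
    rw [← Finset.filter_or]
    simp only [G4, Finset.mem_filter, mem_univ, true_and] at hA ⊢
    obtain ⟨u, v, hi, h | h⟩ := hA
    · exact Or.inl ⟨u, v, hi, h⟩
    · exact Or.inr ⟨u, v, hi, h⟩
  have := (Finset.card_le_card h).trans (Finset.card_union_le _ _)
  omega
open Classical in
lemma dot_card {F : Type} [Field F] [Fintype F] (u : Fin 3 → F) (hu : u ≠ 0) :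
    (univ.filter fun y : Fin 3 → F => u ⬝ᵥ y = 0).card ≤ Fintype.card F ^ 2 := by
  have hq : 0 < Fintype.card F := Fintype.card_pos
  obtain ⟨i, hi⟩ := Function.ne_iff.1 hu
  have a1 := line (F := F) (univ : Finset (Fin 3 → F))
    (univ.filter fun y : Fin 3 → F => u ⬝ᵥ y = 0) (Pi.single i 1) 1 (subset_univ _) (by simp) (by
      intro A
      refine le_trans (Finset.card_le_card ?_) (lin (u i) (u ⬝ᵥ A) hi)
      intro x hx
      simp only [Finset.mem_filter, mem_univ, true_and] at hx ⊢
      rw [← hx]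
      simp
      ring)
  rw [card_univ] at a1
  simp at a1
  refine Nat.le_of_mul_le_mul_left (a1.trans (le_of_eq ?_)) hq
  ring

open Classical in
lemma ker_card {F : Type} [Field F] [Fintype F] (B : Mt F) (hB : B ≠ 0) :
    (univ.filter fun y : Fin 3 → F => B.mulVec y = 0).card ≤ Fintype.card F ^ 2 := by
  obtain ⟨i, hi⟩ := Function.ne_iff.1 hB
  refine le_trans (Finset.card_le_card ?_) (dot_card (B i) hi)
  intro y hy
  simp only [Finset.mem_filter, mem_univ, true_and] at hy ⊢
  exact congrFun hy i

lemma CHe {F : Type} [Field F] (A : Mt F) (e : Fin 3 → F) :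
    A.mulVec (A.mulVec (A.mulVec e)) =
      A.trace • A.mulVec (A.mulVec e) - s2 A • A.mulVec e + A.det • e := by
  have := congrArg (fun M : Mt F => M.mulVec e) (CH A)
  simpa [Matrix.add_mulVec, Matrix.sub_mulVec, Matrix.smul_mulVec, Matrix.mulVec_mulVec,
    mul_assoc] using this

def hq2 {F : Type} [Field F] (A : Mt F) (γ : F) : Mt F :=
  A * A + (γ - A.trace) • A + (γ ^ 2 - A.trace * γ + s2 A) • (1 : Mt F)

lemma bad {F : Type} [Field F] (A : Mt F) (e : Fin 3 → F) (a b c : F)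
    (h0 : ¬ (a = 0 ∧ b = 0 ∧ c = 0))
    (h : a • A.mulVec (A.mulVec e) + b • A.mulVec e + c • e = 0) :
    e = 0 ∨ ∃ γ : F, 1 * γ ^ 3 + (-A.trace) * γ ^ 2 + s2 A * γ + (-A.det) = 0 ∧
      ((A - γ • (1 : Mt F)).mulVec e = 0 ∨ (hq2 A γ).mulVec e = 0) := by
  by_cases he : e = 0
  · exact Or.inl he
  right
  have hc := CHe A e
  by_cases hl : ∃ l : F, A.mulVec e = l • e
  · obtain ⟨l, hl⟩ := hl
    refine ⟨l, ?_, Or.inl ?_⟩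
    · have : (1 * l ^ 3 + (-A.trace) * l ^ 2 + s2 A * l + (-A.det)) • e = 0 := by
        simp only [hl, Matrix.mulVec_smul] at hc
        linear_combination (norm := module) hc
      exact (smul_eq_zero.1 this).resolve_right he
    · simp [Matrix.sub_mulVec, Matrix.smul_mulVec, hl]
  · have ind : ∀ x y : F, x • A.mulVec e + y • e = 0 → x = 0 ∧ y = 0 := by
      intro x y hxy
      have hx : x = 0 := by
        by_contra hx
        apply hl
        refine ⟨-(y / x), ?_⟩
        have : A.mulVec e = x⁻¹ • (x • A.mulVec e) := by rw [smul_smul, inv_mul_cancel₀ hx, one_smul]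
        rw [this, eq_neg_of_add_eq_zero_left hxy, smul_neg, smul_smul, neg_smul]
        congr 2
        field_simp
      refine ⟨hx, ?_⟩
      rw [hx, zero_smul, zero_add] at hxy
      exact (smul_eq_zero.1 hxy).resolve_right he
    have ha : a ≠ 0 := by
      rintro rfl
      rw [zero_smul, zero_add] at h
      exact h0 ⟨rfl, ind _ _ h⟩
    set α := -(b / a) with hα
    set β := -(c / a) with hβ
    have hb : b = -(a * α) := by rw [hα]; field_simp
    have hcc : c = -(a * β) := by rw [hβ]; field_simp
    have e2 : A.mulVec (A.mulVec e) = α • A.mulVec e + β • e := by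
      have : a • (A.mulVec (A.mulVec e) - (α • A.mulVec e + β • e)) = 0 := by
        rw [← h, hb, hcc]; module
      exact sub_eq_zero.1 ((smul_eq_zero.1 this).resolve_left ha)
    have e3 : (α ^ 2 + β - A.trace * α + s2 A) • A.mulVec e +
        (α * β - A.trace * β - A.det) • e = 0 := by
      simp only [e2, Matrix.mulVec_add, Matrix.mulVec_smul] at hc
      linear_combination (norm := module) hc
    obtain ⟨f1, f2⟩ := ind _ _ e3
    refine ⟨A.trace - α, ?_, Or.inr ?_⟩
    · linear_combination f2 + (A.trace - α) * f1
    · simp only [hq2, Matrix.add_mulVec, Matrix.smul_mulVec, ← Matrix.mulVec_mulVec, e2,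
        Matrix.one_mulVec]
      have : (A.trace - α) ^ 2 - A.trace * (A.trace - α) + s2 A = -β := by
        linear_combination f1
      rw [this]
      module

def Ind {F : Type} [Field F] (A : Mt F) : Prop :=
  ∀ a b c : F, a • (A * A) + b • A + c • (1 : Mt F) = 0 → a = 0 ∧ b = 0 ∧ c = 0

open Classical in
lemma cyc {F : Type} [Field F] [Fintype F] (hq : 7 ≤ Fintype.card F) (A : Mt F) (hA : Ind A) :
    ∃ e : Fin 3 → F, ∀ a b c : F, a • A.mulVec (A.mulVec e) + b • A.mulVec e + c • e = 0 →
      a = 0 ∧ b = 0 ∧ c = 0 := by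
  by_contra hcon
  push Not at hcon
  set R := univ.filter fun γ : F =>
    1 * γ ^ 3 + (-A.trace) * γ ^ 2 + s2 A * γ + (-A.det) = 0 with hR
  have hRc : R.card ≤ 3 := cub _ _ _ _ one_ne_zero
  have hcov : (univ : Finset (Fin 3 → F)) ⊆ {0} ∪ R.biUnion (fun γ =>
      (univ.filter fun y : Fin 3 → F => (A - γ • (1 : Mt F)).mulVec y = 0) ∪
      (univ.filter fun y : Fin 3 → F => (hq2 A γ).mulVec y = 0)) := by
    intro e _
    obtain ⟨a, b, c, h, h0⟩ := hcon e
    have h0' : ¬ (a = 0 ∧ b = 0 ∧ c = 0) := fun ⟨x, y, z⟩ => h0 x y z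
    rcases bad A e a b c h0' h with h | ⟨γ, h1, h2⟩
    · simp [h]
    · refine Finset.mem_union_right _ (Finset.mem_biUnion.2 ⟨γ, by simpa [hR] using h1, ?_⟩)
      simpa using h2
  have h1 := (Finset.card_le_card hcov).trans (Finset.card_union_le _ _)
  have h2 := Finset.card_biUnion_le_card_mul R (fun γ =>
      (univ.filter fun y : Fin 3 → F => (A - γ • (1 : Mt F)).mulVec y = 0) ∪
      (univ.filter fun y : Fin 3 → F => (hq2 A γ).mulVec y = 0)) (2 * Fintype.card F ^ 2) (by
    intro γ _
    refine (Finset.card_union_le _ _).trans ?_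
    rw [two_mul]
    refine add_le_add (ker_card _ ?_) (ker_card _ ?_)
    · intro h
      have := hA 0 1 (-γ) (by rw [← h]; module)
      exact one_ne_zero this.2.1
    · intro h
      have := hA 1 (γ - A.trace) (γ ^ 2 - A.trace * γ + s2 A) (by rw [← h, hq2]; module)
      exact one_ne_zero this.1)
  have h3 : R.card * (2 * Fintype.card F ^ 2) ≤ 3 * (2 * Fintype.card F ^ 2) :=
    Nat.mul_le_mul_right _ hRc
  simp only [card_univ, Fintype.card_pi, Finset.prod_const, Fintype.card_fin,
    Finset.card_singleton] at h1
  have h4 : 7 * Fintype.card F ^ 2 ≤ Fintype.card F ^ 3 := by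
    rw [pow_succ, mul_comm]; exact Nat.mul_le_mul_left _ hq
  have h5 : 7 ^ 2 ≤ Fintype.card F ^ 2 := Nat.pow_le_pow_left hq 2
  omega

lemma K_rel {F : Type} [Field F] [Fintype F] (h2 : (2 : F) ≠ 0) (A Z : Mt F) (hZ : Z ∈ K A) :
    A.trace • (A * A * Z) + A.det • Z = 0 ∧ A * A * A * Z + s2 A • (A * Z) = 0 := by
  have hz : Z * A = -(A * Z) := by
    have : A * Z + Z * A = 0 := by simpa [K] using hZ
    exact eq_neg_of_add_eq_zero_right this
  have z2 : Z * (A * A) = A * A * Z := by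
    rw [← mul_assoc, hz, neg_mul, mul_assoc, hz]; simp [mul_assoc]
  have z3 : Z * (A * A * A) = -(A * A * A * Z) := by
    rw [← mul_assoc, z2, mul_assoc _ Z A, hz]; simp [mul_assoc]
  have c1 := congrArg (fun M => M * Z) (CH A)
  have c2 := congrArg (fun M => Z * M) (CH A)
  simp only [add_mul, sub_mul, smul_mul_assoc, one_mul] at c1
  simp only [mul_add, mul_sub, mul_smul_comm, mul_one, z3, z2, hz] at c2
  constructor
  · have : (2 : F) • (A.trace • (A * A * Z) + A.det • Z) = 0 := by
      linear_combination (norm := module) -c1 - c2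
    exact (smul_eq_zero.1 this).resolve_left h2
  · have : (2 : F) • (A * A * A * Z + s2 A • (A * Z)) = 0 := by
      linear_combination (norm := module) c1 - c2
    exact (smul_eq_zero.1 this).resolve_left h2

lemma K_G2 {F : Type} [Field F] [Fintype F] (h2 : (2 : F) ≠ 0) (A Z : Mt F) (hZ : Z ∈ K A)
    (hZ0 : Z ≠ 0) : A ∈ G2 F := by
  obtain ⟨k1, k2⟩ := K_rel h2 A Z hZ
  simp only [G2, Finset.mem_filter, mem_univ, true_and]
  by_cases hd : A.det = 0
  · exact Or.inl hd
  right
  have hu : IsUnit A.det := isUnit_iff_ne_zero.2 hd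
  have k3 : A * A * Z + s2 A • Z = 0 := by
    have : A * (A * A * Z + s2 A • Z) = 0 := by
      rw [← k2]; simp [mul_add, mul_assoc]
    have := congrArg (fun M => A⁻¹ * M) this
    simpa [← mul_assoc, Matrix.nonsing_inv_mul A hu] using this
  have : (A.trace * s2 A - A.det) • Z = 0 := by
    linear_combination (norm := module) A.trace • k3 - k1
  exact sub_eq_zero.1 ((smul_eq_zero.1 this).resolve_right hZ0)

open Classical in
lemma K_cyc {F : Type} [Field F] [Fintype F] (h2 : (2 : F) ≠ 0) (hq : 7 ≤ Fintype.card F)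
    (A : Mt F) (hA : Ind A) :
    (K A).card ≤ Fintype.card F ∨ ((K A).card ≤ Fintype.card F ^ 2 ∧ A ∈ G2 F) ∨
      ((K A).card ≤ Fintype.card F ^ 3 ∧ A ∈ G3 F) := by
  obtain ⟨e, he⟩ := cyc hq A hA
  set P : Mt F := Matrix.of fun i j => ![e, A.mulVec e, A.mulVec (A.mulVec e)] j i with hP
  have hdet : P.det ≠ 0 := by
    intro h
    obtain ⟨v, hv, hv0⟩ := Matrix.exists_mulVec_eq_zero_iff.2 h
    have := he (v 2) (v 1) (v 0) (by
      rw [← hv0]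
      ext i
      have e5 : P.mulVec v i =
          e i * v 0 + A.mulVec e i * v 1 + A.mulVec (A.mulVec e) i * v 2 := by
        change ∑ j, P i j * v j = _
        rw [Fin.sum_univ_three]
        rfl
      rw [e5]
      simp only [Pi.add_apply, Pi.smul_apply, smul_eq_mul]
      ring)
    apply hv
    ext i
    fin_cases i
    · exact this.2.2
    · exact this.2.1
    · exact this.1
  have hinj : Set.InjOn (fun Z : Mt F => Z.mulVec e) (K A : Set (Mt F)) := by
    intro Z hZ W hW h
    have hD : A * (Z - W) + (Z - W) * A = 0 := by
      have a1 : A * Z + Z * A = 0 := by simpa [K] using hZ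
      have a2 : A * W + W * A = 0 := by simpa [K] using hW
      rw [mul_sub, sub_mul, ← sub_zero (0 : Mt F)]
      nth_rewrite 1 [← a1]
      rw [← a2]
      abel
    set D := Z - W with hDd
    have d0 : D.mulVec e = 0 := by
      rw [hDd, Matrix.sub_mulVec]; exact sub_eq_zero.2 h
    have dd : ∀ y, D.mulVec y = 0 → D.mulVec (A.mulVec y) = 0 := by
      intro y hy
      have := congrArg (fun M : Mt F => M.mulVec y) hD
      simpa [Matrix.add_mulVec, ← Matrix.mulVec_mulVec, hy] using this
    have d1 := dd _ d0
    have d2 := dd _ d1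
    have hDP : D * P = 0 := by
      ext i j
      have : ∀ y : Fin 3 → F, D.mulVec y = 0 → ∑ k, D i k * y k = 0 :=
        fun y hy => congrFun hy i
      rw [Matrix.mul_apply]
      fin_cases j
      · exact this _ d0
      · exact this _ d1
      · exact this _ d2
    have := congrArg (fun M => M * P⁻¹) hDP
    have hu : IsUnit P.det := isUnit_iff_ne_zero.2 hdet
    simp only [mul_assoc, Matrix.mul_nonsing_inv P hu, mul_one, zero_mul] at this
    exact sub_eq_zero.1 this
  by_cases hone : (K A).card ≤ 1
  · left; omega
  right
  have hG2 : A ∈ G2 F := by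
    push Not at hone
    obtain ⟨Z, hZ, hZ0⟩ := Finset.exists_mem_ne hone 0
    exact K_G2 h2 A Z hZ hZ0
  by_cases h : A.trace = 0 ∧ A.det = 0
  · right
    refine ⟨?_, by simpa [G3] using h⟩
    have := Finset.card_le_card_of_injOn (t := (univ : Finset (Fin 3 → F))) _ (by simp) hinj
    simpa using this
  · left
    refine ⟨?_, hG2⟩
    have hB : A.trace • (A * A) + A.det • (1 : Mt F) ≠ 0 := by
      intro h0
      have := hA A.trace 0 A.det (by rw [← h0]; module)
      exact h ⟨this.1, this.2.2⟩
    refine le_trans ?_ (ker_card _ hB)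
    refine Finset.card_le_card_of_injOn _ ?_ hinj
    intro Z hZ
    have := (K_rel h2 A Z hZ).1
    simp only [Finset.coe_filter, mem_univ, true_and, Set.mem_ofPred_eq, Matrix.mulVec_mulVec]
    rw [add_mul, smul_mul_assoc, smul_mul_assoc, one_mul, this, Matrix.zero_mulVec]
lemma rank1 {F : Type} [Field F] (B : Mt F) (h : B.rank ≤ 1) :
    ∃ u v : Fin 3 → F, B = Matrix.vecMulVec u v := by
  rw [Matrix.rank, finrank_le_one_iff] at h
  obtain ⟨⟨u, hu⟩, h⟩ := h
  choose c hc using h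
  refine ⟨u, fun j => c ⟨B.mulVecLin (Pi.single j 1), LinearMap.mem_range_self _ _⟩, ?_⟩
  ext i j
  have := congrArg Subtype.val (hc ⟨B.mulVecLin (Pi.single j 1), LinearMap.mem_range_self _ _⟩)
  have := congrFun this i
  simp at this
  simp [Matrix.vecMulVec_apply]
  rw [mul_comm, this]

def Good {F : Type} [Field F] [Fintype F] (A : Mt F) : Prop :=
  (K A).card ≤ Fintype.card F ∨ ((K A).card ≤ Fintype.card F ^ 2 ∧ A ∈ G2 F) ∨
      ((K A).card ≤ Fintype.card F ^ 3 ∧ A ∈ G3 F) ∨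
      ((K A).card ≤ Fintype.card F ^ 4 ∧ A ∈ G4 F) ∨
      ((K A).card ≤ Fintype.card F ^ 5 ∧ A ∈ G5 F)

lemma scalar_good {F : Type} [Field F] [Fintype F] (h2 : (2 : F) ≠ 0) (a : F) (ha : a ≠ 0) :
    Good (a • (1 : Mt F)) := by
  left
  refine le_trans ?_ (Fintype.card_pos (α := F))
  rw [Finset.card_le_one]
  have : ∀ Z ∈ K (a • (1 : Mt F)), Z = 0 := by
    intro Z hZ
    have h : (a • (1 : Mt F)) * Z + Z * (a • (1 : Mt F)) = 0 := by simpa only [K, Finset.mem_filter, mem_univ, true_and] using hZ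
    have : (2 * a) • Z = 0 := by
      rw [← h, smul_mul_assoc, mul_smul_comm, one_mul, mul_one]; module
    exact (smul_eq_zero.1 this).resolve_left (mul_ne_zero h2 ha)
  intro Z hZ W hW
  rw [this Z hZ, this W hW]

lemma sub0 {F : Type} [Field F] (u v : Fin 3 → F) (i0 j0 : Fin 3) (hu : u i0 ≠ 0) (hv : v j0 ≠ 0)
    (D : Mt F) (h1 : D.mulVec u = 0) (h2 : Matrix.vecMul v D = 0)
    (h3 : ∀ a b : Fin 2, D (j0.succAbove a) (i0.succAbove b) = 0) : D = 0 := by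
  have k1 : ∀ i, i ≠ j0 → ∀ j, D i j = 0 := by
    intro i hi
    obtain ⟨a, rfl⟩ := Fin.exists_succAbove_eq hi
    have k0 : ∀ j, j ≠ i0 → D (j0.succAbove a) j = 0 := by
      intro j hj
      obtain ⟨b, rfl⟩ := Fin.exists_succAbove_eq hj
      exact h3 a b
    intro j
    by_cases hj : j = i0
    · subst hj
      have := congrFun h1 (j0.succAbove a)
      simp only [Matrix.mulVec, dotProduct, Pi.zero_apply] at this
      rw [Finset.sum_eq_single j (fun b _ hb => by rw [k0 b hb, zero_mul]) (by simp)] at this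
      exact (mul_eq_zero.1 this).resolve_right hu
    · exact k0 j hj
  ext i j
  by_cases hi : i = j0
  · subst hi
    have := congrFun h2 j
    simp only [Matrix.vecMul, dotProduct, Pi.zero_apply] at this
    rw [Finset.sum_eq_single i (fun b _ hb => by rw [k1 b hb, mul_zero]) (by simp)] at this
    exact (mul_eq_zero.1 this).resolve_left hv
  · exact k1 i hi j

lemma der_good {F : Type} [Field F] [Fintype F] (h2 : (2 : F) ≠ 0) (a : F) (u v : Fin 3 → F)
    (i0 : Fin 3) (hu : u i0 = 1) (hv : v ≠ 0) :
    Good (a • (1 : Mt F) + Matrix.vecMulVec u v) := by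
  classical
  obtain ⟨j0, hj0⟩ := Function.ne_iff.1 hv
  simp only [Pi.zero_apply] at hj0
  set A := a • (1 : Mt F) + Matrix.vecMulVec u v with hA
  have H : ∀ Z ∈ K A, ∀ i j, 2 * a * Z i j + u i * Matrix.vecMul v Z j + Z.mulVec u i * v j = 0 := by
    intro Z hZ i j
    have h : A * Z + Z * A = 0 := by
      simpa only [K, Finset.mem_filter, mem_univ, true_and] using hZ
    rw [hA, add_mul, mul_add, smul_mul_assoc, mul_smul_comm, one_mul, mul_one,
      Matrix.vecMulVec_mul, Matrix.mul_vecMulVec] at h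
    have := congrFun (congrFun h i) j
    simp [Matrix.vecMulVec_apply] at this
    linear_combination this
  have S1 : ∀ Z : Mt F, Matrix.vecMul v Z ⬝ᵥ u = v ⬝ᵥ Z.mulVec u :=
    fun Z => (Matrix.dotProduct_mulVec v Z u).symm
  have Hw : ∀ Z ∈ K A, ∀ j, (2 * a + u ⬝ᵥ v) * Matrix.vecMul v Z j + (v ⬝ᵥ Z.mulVec u) * v j = 0 := by
    intro Z hZ j
    have := H Z hZ
    have e1 : Matrix.vecMul v Z j = v 0 * Z 0 j + v 1 * Z 1 j + v 2 * Z 2 j := by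
      simp [Matrix.vecMul, dotProduct, Fin.sum_univ_three]
    have e2 : v ⬝ᵥ Z.mulVec u = v 0 * Z.mulVec u 0 + v 1 * Z.mulVec u 1 + v 2 * Z.mulVec u 2 := by
      simp [dotProduct, Fin.sum_univ_three]
    have e3 : u ⬝ᵥ v = u 0 * v 0 + u 1 * v 1 + u 2 * v 2 := by
      simp [dotProduct, Fin.sum_univ_three]
    rw [e2, e3]
    linear_combination v 0 * this 0 j + v 1 * this 1 j + v 2 * this 2 j + 2 * a * e1
  have Hz : ∀ Z ∈ K A, ∀ i, (2 * a + u ⬝ᵥ v) * Z.mulVec u i + (v ⬝ᵥ Z.mulVec u) * u i = 0 := by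
    intro Z hZ i
    have := H Z hZ
    have e1 : Z.mulVec u i = Z i 0 * u 0 + Z i 1 * u 1 + Z i 2 * u 2 := by
      simp [Matrix.mulVec, dotProduct, Fin.sum_univ_three]
    have e2 : Matrix.vecMul v Z ⬝ᵥ u = Matrix.vecMul v Z 0 * u 0 + Matrix.vecMul v Z 1 * u 1 +
        Matrix.vecMul v Z 2 * u 2 := by
      simp [dotProduct, Fin.sum_univ_three]
    have e3 : u ⬝ᵥ v = u 0 * v 0 + u 1 * v 1 + u 2 * v 2 := by
      simp [dotProduct, Fin.sum_univ_three]
    rw [← S1, e2, e3]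
    linear_combination u 0 * this i 0 + u 1 * this i 1 + u 2 * this i 2 + 2 * a * e1
  by_cases ha : a = 0
  · -- rank one
    have hAv : A = Matrix.vecMulVec u v := by rw [hA, ha]; simp
    have Lz : ∀ Z ∈ K A, ∀ i, Z.mulVec u i = Z.mulVec u i0 * u i := by
      intro Z hZ i
      have h1 := H Z hZ i0 j0
      have h3 := H Z hZ i j0
      rw [hu] at h1
      have : v j0 * (Z.mulVec u i - Z.mulVec u i0 * u i) = 0 := by
        rw [ha] at h1 h3
        linear_combination h3 - u i * h1
      exact sub_eq_zero.1 ((mul_eq_zero.1 this).resolve_left hj0)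
    have Lw : ∀ Z ∈ K A, ∀ j, Matrix.vecMul v Z j = -Z.mulVec u i0 * v j := by
      intro Z hZ j
      have h1 := H Z hZ i0 j
      rw [hu, ha] at h1
      linear_combination h1
    have inj : ∀ Z ∈ K A, ∀ W ∈ K A, Z.mulVec u i0 = W.mulVec u i0 →
        (∀ x y : Fin 2, Z (j0.succAbove x) (i0.succAbove y) =
          W (j0.succAbove x) (i0.succAbove y)) → Z = W := by
      intro Z hZ W hW h1 h3
      rw [← sub_eq_zero]
      refine sub0 u v i0 j0 (by rw [hu]; exact one_ne_zero) hj0 _ ?_ ?_ ?_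
      · rw [Matrix.sub_mulVec, sub_eq_zero]
        ext i
        rw [Lz Z hZ, Lz W hW, h1]
      · rw [Matrix.vecMul_sub, sub_eq_zero]
        ext i
        rw [Lw Z hZ, Lw W hW, h1]
      · intro x y
        rw [Matrix.sub_apply, h3, sub_self]
    by_cases huv : u ⬝ᵥ v = 0
    · right; right; right; right
      refine ⟨?_, ?_⟩
      · have := Finset.card_le_card_of_injOn (s := K A)
          (t := (univ : Finset (F × (Fin 2 → Fin 2 → F))))
          (fun Z => (Z.mulVec u i0, fun x y => Z (j0.succAbove x) (i0.succAbove y))) (by simp) (by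
            intro Z hZ W hW h
            simp only [Prod.mk.injEq] at h
            exact inj Z hZ W hW h.1 (fun x y => congrFun (congrFun h.2 x) y))
        refine this.trans (le_of_eq ?_)
        simp
        ring
      · simp only [G5, Finset.mem_filter, mem_univ, true_and]
        exact ⟨u, v, ⟨i0, hu⟩, huv, hAv⟩
    · right; right; right; left
      refine ⟨?_, ?_⟩
      · have l0 : ∀ Z ∈ K A, Z.mulVec u i0 = 0 := by
          intro Z hZ
          have h1 := Hz Z hZ i0
          have h3 : v ⬝ᵥ Z.mulVec u = Z.mulVec u i0 * (u ⬝ᵥ v) := by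
            have : Z.mulVec u = Z.mulVec u i0 • u := by
              ext i; rw [Lz Z hZ i]; simp
            rw [this, dotProduct_smul, dotProduct_comm]; simp [hu]
          rw [h3, hu, ha] at h1
          have : 2 * (u ⬝ᵥ v) * Z.mulVec u i0 = 0 := by linear_combination h1
          exact (mul_eq_zero.1 this).resolve_left (mul_ne_zero h2 huv)
        have := Finset.card_le_card_of_injOn (s := K A)
          (t := (univ : Finset (Fin 2 → Fin 2 → F)))
          (fun Z => fun x y => Z (j0.succAbove x) (i0.succAbove y)) (by simp) (by
            intro Z hZ W hW h
            exact inj Z hZ W hW (by rw [l0 Z hZ, l0 W hW]) (fun x y => congrFun (congrFun h x) y))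
        refine this.trans (le_of_eq ?_)
        simp
        ring
      · simp only [G4, Finset.mem_filter, mem_univ, true_and]
        exact ⟨u, v, ⟨i0, hu⟩, Or.inl hAv⟩
  · by_cases ht : 2 * a + u ⬝ᵥ v = 0
    · right; right; right; left
      have s0 : ∀ Z ∈ K A, v ⬝ᵥ Z.mulVec u = 0 := by
        intro Z hZ
        have := Hw Z hZ j0
        rw [ht, zero_mul, zero_add] at this
        exact (mul_eq_zero.1 this).resolve_right hj0
      refine ⟨?_, ?_⟩
      · have hu0 : u ≠ 0 := by
          intro h; rw [h] at hu; simp at hu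
        have := Finset.card_le_card_of_injOn (s := K A)
          (t := (univ.filter fun y : Fin 3 → F => u ⬝ᵥ y = 0) ×ˢ
            (univ.filter fun y : Fin 3 → F => v ⬝ᵥ y = 0))
          (fun Z => (Matrix.vecMul v Z, Z.mulVec u)) (by
            intro Z hZ
            simp only [Finset.coe_product, Set.mem_prod, Finset.mem_coe, Finset.mem_filter,
              mem_univ, true_and]
            refine ⟨?_, s0 Z hZ⟩
            rw [dotProduct_comm, S1, s0 Z hZ]) (by
            intro Z hZ W hW h
            simp only [Prod.mk.injEq] at h
            ext i j
            have h1 := H Z hZ i j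
            have h3 := H W hW i j
            rw [h.1, h.2] at h1
            have : 2 * a * (Z i j - W i j) = 0 := by linear_combination h1 - h3
            exact sub_eq_zero.1 ((mul_eq_zero.1 this).resolve_left (mul_ne_zero h2 ha)))
        rw [Finset.card_product] at this
        refine this.trans ((Nat.mul_le_mul (dot_card u hu0) (dot_card v hv)).trans (le_of_eq ?_))
        ring
      · simp only [G4, Finset.mem_filter, mem_univ, true_and]
        refine ⟨u, v, ⟨i0, hu⟩, Or.inr ?_⟩
        have : u ⬝ᵥ v / 2 = -a := by
          field_simp
          linear_combination ht
        rw [this, hA]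
        module
    · left
      have := Finset.card_le_card_of_injOn (s := K A) (t := (univ : Finset F))
          (fun Z => v ⬝ᵥ Z.mulVec u) (by simp) (by
            intro Z hZ W hW h
            simp only at h
            ext i j
            have h1 := H Z hZ i j
            have h3 := H W hW i j
            have w1 := Hw Z hZ j
            have w2 := Hw W hW j
            have z1 := Hz Z hZ i
            have z2 := Hz W hW i
            rw [h] at w1 z1
            have : (2 * a + u ⬝ᵥ v) * (2 * a) * (Z i j - W i j) = 0 := by
              linear_combination (2 * a + u ⬝ᵥ v) * (h1 - h3) - u i * (w1 - w2) - v j * (z1 - z2)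
            exact sub_eq_zero.1 ((mul_eq_zero.1 this).resolve_left
              (mul_ne_zero ht (mul_ne_zero h2 ha))))
      simpa using this

lemma der_good' {F : Type} [Field F] [Fintype F] (h2 : (2 : F) ≠ 0) (a : F) (u v : Fin 3 → F)
    (h0 : a • (1 : Mt F) + Matrix.vecMulVec u v ≠ 0) :
    Good (a • (1 : Mt F) + Matrix.vecMulVec u v) := by
  by_cases hz : Matrix.vecMulVec u v = 0
  · rw [hz, add_zero] at h0 ⊢
    refine scalar_good h2 a ?_
    rintro rfl
    simp at h0
  · have hv : v ≠ 0 := by rintro rfl; simp at hz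
    have hu : u ≠ 0 := by rintro rfl; simp at hz
    obtain ⟨i, hi⟩ := Function.ne_iff.1 hu
    simp only [Pi.zero_apply] at hi
    have e : Matrix.vecMulVec u v = Matrix.vecMulVec ((u i)⁻¹ • u) (u i • v) := by
      ext x y
      simp only [Matrix.vecMulVec_apply, Pi.smul_apply, smul_eq_mul]
      field_simp
    rw [e]
    exact der_good h2 a _ _ i (by simp [hi]) (smul_ne_zero hi hv)

lemma classify {F : Type} [Field F] [Fintype F] (h2 : (2 : F) ≠ 0) (hq : 7 ≤ Fintype.card F)
    (A : Mt F) (hA : A ≠ 0) : Good A := by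
  by_cases hI : Ind A
  · rcases K_cyc h2 hq A hI with h | h | h
    · exact Or.inl h
    · exact Or.inr (Or.inl h)
    · exact Or.inr (Or.inr (Or.inl h))
  · unfold Ind at hI
    push Not at hI
    obtain ⟨a, b, c, h, hne⟩ := hI
    have fin : ∀ (x : F) (B : Mt F), B.rank ≤ 1 → A = x • (1 : Mt F) + B → Good A := by
      intro x B hB hAB
      obtain ⟨u, v, rfl⟩ := rank1 B hB
      rw [hAB] at hA ⊢
      exact der_good' h2 x u v hA
    by_cases ha : a = 0
    · subst ha
      rw [zero_smul, zero_add] at h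
      have hb : b ≠ 0 := by
        rintro rfl
        rw [zero_smul, zero_add] at h
        exact hne rfl rfl ((smul_eq_zero.1 h).resolve_right one_ne_zero)
      refine fin (-(c / b)) 0 (by simp) ?_
      have : b • (A - ((-(c / b)) • (1 : Mt F) + 0)) = 0 := by
        have hcb : b * (c / b) = c := by field_simp
        rw [add_zero, smul_sub, smul_smul, mul_neg, hcb, ← h]
        module
      exact sub_eq_zero.1 ((smul_eq_zero.1 this).resolve_left hb)
    · set β := b / (2 * a) with hβ
      set γ := β ^ 2 - c / a with hγ
      set M := A + β • (1 : Mt F) with hM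
      have hMM : M * M = γ • (1 : Mt F) := by
        have e1 : b = 2 * a * β := by rw [hβ]; field_simp
        have e2 : c = a * (β ^ 2 - γ) := by rw [hγ]; field_simp; ring
        have : a • (M * M - γ • (1 : Mt F)) = 0 := by
          rw [← h, e1, e2, hM]
          simp only [add_mul, mul_add, smul_mul_assoc, mul_smul_comm, mul_one, one_mul]
          module
        exact sub_eq_zero.1 ((smul_eq_zero.1 this).resolve_left ha)
      obtain ⟨δ, hδ⟩ : ∃ δ : F, δ ^ 2 = γ := by
        by_cases h0 : γ = 0
        · exact ⟨0, by rw [h0]; simp⟩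
        · refine ⟨M.det / γ, ?_⟩
          have := congrArg Matrix.det hMM
          rw [Matrix.det_mul, Matrix.det_smul] at this
          simp at this
          field_simp
          linear_combination this
      have hprod : (M - δ • (1 : Mt F)) * (M + δ • (1 : Mt F)) = 0 := by
        simp only [sub_mul, mul_add, smul_mul_assoc, mul_smul_comm, mul_one, one_mul, hMM, ← hδ]
        module
      have hr := Matrix.rank_add_rank_le_card_of_mul_eq_zero hprod
      simp at hr
      rcases Nat.lt_or_ge 1 (M - δ • (1 : Mt F)).rank with h1 | h1
      · refine fin (-δ - β) (M + δ • (1 : Mt F)) (by omega) ?_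
        rw [hM]; module
      · refine fin (δ - β) (M - δ • (1 : Mt F)) h1 ?_
        rw [hM]; module
lemma wk {q κ k m r : ℕ} (hq : 1 ≤ q) (hκ : κ ≤ q ^ k) (hm : 2 * m + k * r ≤ 5 * r + 8) :
    √((q : ℝ) ^ (9 * r) * (κ : ℝ) ^ r) ≤ (q : ℝ) ^ (7 * r + 4) / (q : ℝ) ^ m := by
  have hq' : (1 : ℝ) ≤ q := by exact_mod_cast hq
  have hκ' : (κ : ℝ) ≤ (q : ℝ) ^ k := by exact_mod_cast hκ
  rw [le_div_iff₀ (by positivity)]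
  refine (pow_le_pow_iff_left₀ (by positivity) (by positivity) two_ne_zero).1 ?_
  rw [mul_pow, Real.sq_sqrt (by positivity)]
  calc (q : ℝ) ^ (9 * r) * (κ : ℝ) ^ r * ((q : ℝ) ^ m) ^ 2
      ≤ (q : ℝ) ^ (9 * r) * ((q : ℝ) ^ k) ^ r * ((q : ℝ) ^ m) ^ 2 := by gcongr
    _ = (q : ℝ) ^ (9 * r + k * r + m * 2) := by rw [← pow_mul, ← pow_mul, ← pow_add, ← pow_add]
    _ ≤ (q : ℝ) ^ ((7 * r + 4) * 2) := pow_le_pow_right₀ hq' (by omega)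
    _ = _ := by rw [pow_mul]

lemma sum_ind {α : Type} [Fintype α] [DecidableEq α] (S : Finset α) (C q W : ℝ) (m : ℕ)
    (hq : 0 < q) (hW : 0 ≤ W) (h : (S.card : ℝ) ≤ C * q ^ m) :
    ∑ A : α, (if A ∈ S then W / q ^ m else 0) ≤ C * W := by
  rw [← Finset.sum_filter, Finset.filter_mem_eq_inter, Finset.univ_inter, Finset.sum_const,
    nsmul_eq_mul]
  calc (S.card : ℝ) * (W / q ^ m) ≤ C * q ^ m * (W / q ^ m) := by gcongr
    _ = C * W := by field_simp

open Classical in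
lemma total {F : Type} [Field F] [Fintype F] (h2 : (2 : F) ≠ 0) (hq : 7 ≤ Fintype.card F)
    {r : ℕ} (hr : 3 ≤ r) :
    ∑ A ∈ univ.filter (fun A : Mt F => A ≠ 0),
      √((Fintype.card F : ℝ) ^ (9 * r) * ((K A).card : ℝ) ^ r) ≤
      19 * (Fintype.card F : ℝ) ^ (7 * r + 4) := by
  have hq1 : 1 ≤ Fintype.card F := by omega
  have hq0 : (0 : ℝ) < Fintype.card F := by exact_mod_cast hq1
  set q : ℝ := (Fintype.card F : ℝ) with hqd
  set W : ℝ := q ^ (7 * r + 4) with hW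
  have hW0 : 0 ≤ W := by positivity
  have pw : ∀ A ∈ univ.filter (fun A : Mt F => A ≠ 0),
      √(q ^ (9 * r) * ((K A).card : ℝ) ^ r) ≤
      (if A ∈ (univ : Finset (Mt F)) then W / q ^ 9 else 0) + (if A ∈ G2 F then W / q ^ 8 else 0) +
      (if A ∈ G3 F then W / q ^ 7 else 0) + (if A ∈ G4 F then W / q ^ 5 else 0) +
      (if A ∈ G5 F then W / q ^ 4 else 0) := by
    intro A hA
    have nn : ∀ (S : Finset (Mt F)) (m : ℕ), 0 ≤ (if A ∈ S then W / q ^ m else 0) := by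
      intro S m
      split_ifs <;> positivity
    have n1 := nn univ 9
    have n2 := nn (G2 F) 8
    have n3 := nn (G3 F) 7
    have n4 := nn (G4 F) 5
    have n5 := nn (G5 F) 4
    rcases classify h2 hq A (by simpa using hA) with h | ⟨h, hG⟩ | ⟨h, hG⟩ | ⟨h, hG⟩ | ⟨h, hG⟩
    · have := wk (k := 1) (m := 9) (r := r) hq1 (by simpa using h) (by omega)
      rw [if_pos (mem_univ A)]
      linarith
    · have := wk (m := 8) (r := r) hq1 h (by omega)
      rw [if_pos hG]
      linarith
    · have := wk (m := 7) (r := r) hq1 h (by omega)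
      rw [if_pos hG]
      linarith
    · have := wk (m := 5) (r := r) hq1 h (by omega)
      rw [if_pos hG]
      linarith
    · have := wk (m := 4) (r := r) hq1 h (by omega)
      rw [if_pos hG]
      linarith
  refine (Finset.sum_le_sum pw).trans ?_
  refine (Finset.sum_le_sum_of_subset_of_nonneg (subset_univ _) ?_).trans ?_
  · intro A _ _
    have nn : ∀ (S : Finset (Mt F)) (m : ℕ), 0 ≤ (if A ∈ S then W / q ^ m else 0) := by
      intro S m
      split_ifs <;> positivity
    exact add_nonneg (add_nonneg (add_nonneg (add_nonneg (nn _ _) (nn _ _)) (nn _ _)) (nn _ _))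
      (nn _ _)
  · simp only [Finset.sum_add_distrib]
    have s1 := sum_ind (univ : Finset (Mt F)) 1 q W 9 hq0 hW0 (by
      rw [card_univ, card_Mt]; push_cast; rw [one_mul])
    have s2 := sum_ind (G2 F) 6 q W 8 hq0 hW0 (by rw [hqd]; exact_mod_cast G2_card (F := F) h2)
    have s3 := sum_ind (G3 F) 3 q W 7 hq0 hW0 (by rw [hqd]; exact_mod_cast G3_card (F := F) h2)
    have s4 := sum_ind (G4 F) 6 q W 5 hq0 hW0 (by rw [hqd]; exact_mod_cast G4_card (F := F))
    have s5 := sum_ind (G5 F) 3 q W 4 hq0 hW0 (by rw [hqd]; exact_mod_cast G5_card (F := F))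
    linarith
end Falc


/-- Theorem 1.5 (rank 3 Falconer): if `E ⊆ M_3(F_q)^r`, `r ≥ 3`, and
`#E > c q^{7r+4+ε}`, then every matrix arises as a distance of `E`. -/
theorem falconer_rank_three (r : ℕ) (hr : 3 ≤ r) (ε : ℝ) (hε : 0 < ε) :
    ∃ c : ℝ, 0 < c ∧
      ∀ (F : Type) [Field F] [Fintype F],
        Odd (Fintype.card F) →
        ∀ E : Finset (Fin r → Matrix (Fin 3) (Fin 3) F),
          c * (Fintype.card F : ℝ) ^ ((7 * (r : ℝ) + 4) + ε) < (E.card : ℝ) →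
          {T : Matrix (Fin 3) (Fin 3) F |
              ∃ X ∈ E, ∃ Y ∈ E, ∑ i, (X i - Y i) ^ 2 = T} = Set.univ := by
  refine ⟨19 + 7 ^ (9 * r), by positivity, ?_⟩
  intro F _ _ hodd E hE
  have hq1 : (1 : ℝ) ≤ Fintype.card F := by exact_mod_cast Fintype.card_pos (α := F)
  have hpow : (Fintype.card F : ℝ) ^ (7 * r + 4) ≤
      (Fintype.card F : ℝ) ^ ((7 * (r : ℝ) + 4) + ε) := by
    rw [← Real.rpow_natCast]
    apply Real.rpow_le_rpow_of_exponent_le hq1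
    push_cast
    linarith
  have hone : (1 : ℝ) ≤ (Fintype.card F : ℝ) ^ (7 * r + 4) := one_le_pow₀ hq1
  have h7 : (0 : ℝ) ≤ 7 ^ (9 * r) := by positivity
  have hlt : (19 + 7 ^ (9 * r)) * (Fintype.card F : ℝ) ^ (7 * r + 4) < (E.card : ℝ) :=
    lt_of_le_of_lt (mul_le_mul_of_nonneg_left hpow (by positivity)) hE
  by_cases hq : 7 ≤ Fintype.card F
  · rw [Set.eq_univ_iff_forall]
    intro T
    by_contra hT
    have h1 := Falc.main1 E T hT
    have h2 := Falc.total (Falc.two_ne hodd) hq hr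
    nlinarith
  · exfalso
    have h1 : E.card ≤ 7 ^ (9 * r) := by
      refine (Finset.card_le_univ E).trans ?_
      have : Fintype.card (Fin r → Matrix (Fin 3) (Fin 3) F) = Fintype.card F ^ (9 * r) := by
        rw [Fintype.card_pi, Finset.prod_const, Falc.card_Mt, pow_mul]
        simp
      rw [this]
      exact Nat.pow_le_pow_left (by omega) _
    have h2 : (E.card : ℝ) ≤ 7 ^ (9 * r) := by exact_mod_cast h1
    nlinarith
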